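/- Let 𝕏 be a σ-finite measure space, ℳ a Banach L^0(𝕏)-module, and I a nonempty index set. The unique linear continuous operator 𝔦 : L^0(𝕏;ℓ₁(I)) ⊗̂_π ℳ → ℓ₁(I,ℳ) satisfying 𝔦(a ⊗ v) = (a(·)_i · v)_{i∈I} for every a ∈ L^0(𝕏;ℓ₁(I)) and v ∈ ℳ is an isomorphism of Banach L^0(𝕏)-modules. -/

import Mathlib

open MeasureTheory Filter Set TensorProduct

noncomputable section

namespace Paper

variable {X : Type*} [MeasurableSpace X]

/-- The space `L⁰(𝕏)` of real-valued measurable functions up to `μ`-a.e. equality. -/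
abbrev L0 (μ : Measure X) : Type _ := X →ₘ[μ] ℝ

instance (μ : Measure X) : CommRing (L0 μ) :=
  { (inferInstance : AddCommGroup (L0 μ)), (inferInstance : CommMonoid (L0 μ)) with
    left_distrib := fun a b c => AEEqFun.toGerm_injective <| by
      simp only [AEEqFun.mul_toGerm, AEEqFun.add_toGerm, mul_add]
    right_distrib := fun a b c => AEEqFun.toGerm_injective <| by
      simp only [AEEqFun.mul_toGerm, AEEqFun.add_toGerm, add_mul]
    zero_mul := fun a => AEEqFun.toGerm_injective <| by
      simp only [AEEqFun.mul_toGerm, AEEqFun.zero_toGerm, zero_mul]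
    mul_zero := fun a => AEEqFun.toGerm_injective <| by
      simp only [AEEqFun.mul_toGerm, AEEqFun.zero_toGerm, mul_zero] }

/-- The distance on `L⁰(𝕏)` inducing the topology of convergence in measure, defined through
the auxiliary finite measure `μ.toFinite` (which satisfies `μ ≪ μ.toFinite ≪ μ`). -/
noncomputable def dL0 (μ : Measure X) [SFinite μ] (f g : L0 μ) : ℝ :=
  ∫ x, min |f x - g x| 1 ∂(μ.toFinite)

/-- A Banach `L⁰(𝕏)`-module: a module over `L⁰(𝕏)` endowed with a pointwise norm, complete
with respect to the induced distance. -/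
class BanachMod (μ : Measure X) [SFinite μ] (M : Type*) [AddCommGroup M]
    [Module (L0 μ) M] where
  pn : M → L0 μ
  pn_nonneg : ∀ v : M, 0 ≤ pn v
  pn_eq_zero : ∀ v : M, pn v = 0 ↔ v = 0
  pn_add_le : ∀ v w : M, pn (v + w) ≤ pn v + pn w
  pn_smul : ∀ (f : L0 μ) (v : M), pn (f • v) = |f| * pn v
  complete : ∀ u : ℕ → M,
    (∀ ε : ℝ, 0 < ε → ∃ N : ℕ, ∀ m ≥ N, ∀ n ≥ N, dL0 μ (pn (u m - u n)) 0 < ε) →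
    ∃ v : M, Tendsto (fun n => dL0 μ (pn (u n - v)) 0) atTop (nhds 0)

/-- The pointwise norm of a Banach `L⁰(𝕏)`-module, with the measure explicit. -/
noncomputable def pn (μ : Measure X) [SFinite μ] {M : Type*} [AddCommGroup M]
    [Module (L0 μ) M] [BanachMod μ M] (v : M) : L0 μ :=
  BanachMod.pn v

/-- The distance on a Banach `L⁰(𝕏)`-module. -/
noncomputable def dM (μ : Measure X) [SFinite μ] {M : Type*} [AddCommGroup M]
    [Module (L0 μ) M] [BanachMod μ M] (v w : M) : ℝ :=
  dL0 μ (pn μ (v - w)) 0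

section Defs

variable (μ : Measure X) [SFinite μ]
variable {M N : Type*} [AddCommGroup M] [Module (L0 μ) M] [BanachMod μ M]
  [AddCommGroup N] [Module (L0 μ) N] [BanachMod μ N]

/-- The set of admissible bounds of a map between Banach `L⁰(𝕏)`-modules; the pointwise norm
`|T|` of a homomorphism is the infimum of this set. -/
def homBddSet (T : M → N) : Set (L0 μ) :=
  {g | 0 ≤ g ∧ ∀ v, pn μ (T v) ≤ g * pn μ v}

/-- A homomorphism of Banach `L⁰(𝕏)`-modules: an `L⁰(𝕏)`-linear map admitting a bound
`g ∈ L⁰(𝕏)⁺` with `|T v| ≤ g |v|` (equivalently, `L⁰(𝕏)`-linear and continuous). -/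
def IsHom (T : M →ₗ[L0 μ] N) : Prop :=
  ∃ g, g ∈ homBddSet μ (⇑T)

/-- The set of admissible bounds of an `L⁰(𝕏)`-valued map (for elements of the dual module). -/
def dualBddSet (ω : M → L0 μ) : Set (L0 μ) :=
  {g | 0 ≤ g ∧ ∀ v, |ω v| ≤ g * pn μ v}

/-- Membership in the dual module `ℳ*`: an `L⁰(𝕏)`-linear map `ω : ℳ → L⁰(𝕏)` admitting a
bound `g ∈ L⁰(𝕏)⁺` with `|ω v| ≤ g |v|`. -/
def IsDual (ω : M →ₗ[L0 μ] L0 μ) : Prop :=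
  ∃ g, g ∈ dualBddSet μ (⇑ω)

/-- Membership in the unit disc `𝔻_{ℳ*}` of the dual module: `|ω| ≤ 1`, equivalently
`|ω v| ≤ |v|` for every `v`. -/
def InDualDisc (ω : M →ₗ[L0 μ] L0 μ) : Prop :=
  ∀ v, |ω v| ≤ pn μ v

/-- The family of pointwise norms `|s - ∑_{i ∈ F ∪ G} v i|` for `G` finite disjoint from `F`,
whose `F`-indexed inf-sup being `0` defines `s = ∑_{i∈I} v i`. -/
def sumUB {I : Type*} (v : I → M) (s : M) (F : Finset I) : Set (L0 μ) :=
  {g | ∃ G : Finset I, Disjoint G F ∧ g = pn μ (s - (∑ i ∈ F, v i + ∑ i ∈ G, v i))}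

/-- `HasSumMod μ v s` means that the family `{v_i}` is summable in the Banach `L⁰(𝕏)`-module
with sum `s`, i.e. `⋀_F ⋁_G |s - ∑_{i ∈ F ∪ G} v_i| = 0` (the inner suprema being the values
of `b`, and the outer infimum being `0`). -/
def HasSumMod {I : Type*} (v : I → M) (s : M) : Prop :=
  ∃ b : Finset I → L0 μ, (∀ F, IsLUB (sumUB μ v s F) (b F)) ∧ IsGLB (Set.range b) 0

/-- A family in a Banach `L⁰(𝕏)`-module is summable if it has a sum. -/
def SummableMod {I : Type*} (v : I → M) : Prop :=
  ∃ s, HasSumMod μ v s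

/-- The partial sums `∑_{i ∈ F} |v i|` of the pointwise norms of a family; the element `|v|₁`
of `ℓ₁(I, ℳ)` is the supremum of this set. -/
def l1PartialSums {I : Type*} (v : I → M) : Set (L0 μ) :=
  {g | ∃ F : Finset I, g = ∑ i ∈ F, pn μ (v i)}

/-- Membership in `ℓ₁(I, ℳ)`: the partial sums of the pointwise norms admit a supremum
(equivalently, an upper bound) in `L⁰(𝕏)`. -/
def Meml1 {I : Type*} (v : I → M) : Prop :=
  ∃ b, IsLUB (l1PartialSums μ v) b

/-- The partial sums `∑_{i ∈ F} |v i|` for an `L⁰(𝕏)`-valued family. -/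
def l1PartialSumsF {I : Type*} (v : I → L0 μ) : Set (L0 μ) :=
  {g | ∃ F : Finset I, g = ∑ i ∈ F, |v i|}

/-- Membership in `ℓ₁(I, L⁰(𝕏))`. -/
def Meml1F {I : Type*} (v : I → L0 μ) : Prop :=
  ∃ b, IsLUB (l1PartialSumsF μ v) b

/-- The set whose infimum defines the projective pointwise norm: all values
`∑_{i=1}^n |v_i||w_i|` over representations `α = ∑_{i=1}^n v_i ⊗ w_i`. -/
def piReps (α : M ⊗[L0 μ] N) : Set (L0 μ) :=
  {g | ∃ (n : ℕ) (v : Fin n → M) (w : Fin n → N),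
    α = ∑ i, v i ⊗ₜ[L0 μ] w i ∧ g = ∑ i, pn μ (v i) * pn μ (w i)}

/-- The set whose supremum defines the injective pointwise norm: all values
`|∑_{i=1}^n ω(v_i) η(w_i)|` over representations `α = ∑_{i=1}^n v_i ⊗ w_i` and elements
`ω ∈ 𝔻_{ℳ*}`, `η ∈ 𝔻_{𝒩*}`. -/
def epsReps (α : M ⊗[L0 μ] N) : Set (L0 μ) :=
  {g | ∃ (n : ℕ) (v : Fin n → M) (w : Fin n → N)
    (ω : M →ₗ[L0 μ] L0 μ) (η : N →ₗ[L0 μ] L0 μ), InDualDisc μ ω ∧ InDualDisc μ η ∧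
    α = ∑ i, v i ⊗ₜ[L0 μ] w i ∧ g = |∑ i, ω (v i) * η (w i)|}

/-- `IsPiTensor μ M N P e` states that the Banach `L⁰(𝕏)`-module `P`, together with the
`L⁰(𝕏)`-linear map `e` defined on the algebraic tensor product, realizes the projective
tensor product `ℳ ⊗̂_π 𝒩`: the pointwise norm of `e α` is the projective pointwise norm
`|α|_π` and the image of `e` is dense. -/
structure IsPiTensor (M N P : Type*) [AddCommGroup M] [Module (L0 μ) M] [BanachMod μ M]
    [AddCommGroup N] [Module (L0 μ) N] [BanachMod μ N]
    [AddCommGroup P] [Module (L0 μ) P] [BanachMod μ P]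
    (e : M ⊗[L0 μ] N →ₗ[L0 μ] P) : Prop where
  pn_emb : ∀ α : M ⊗[L0 μ] N, IsGLB (piReps μ α) (pn μ (e α))
  dense : ∀ p : P, ∀ ε : ℝ, 0 < ε → ∃ α : M ⊗[L0 μ] N, dM μ (e α) p < ε

/-- `IsEpsTensor μ M N P e` states that the Banach `L⁰(𝕏)`-module `P`, together with the
`L⁰(𝕏)`-linear map `e` defined on the algebraic tensor product, realizes the injective
tensor product `ℳ ⊗̂_ε 𝒩`: the pointwise norm of `e α` is the injective pointwise norm
`|α|_ε` and the image of `e` is dense. -/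
structure IsEpsTensor (M N P : Type*) [AddCommGroup M] [Module (L0 μ) M] [BanachMod μ M]
    [AddCommGroup N] [Module (L0 μ) N] [BanachMod μ N]
    [AddCommGroup P] [Module (L0 μ) P] [BanachMod μ P]
    (e : M ⊗[L0 μ] N →ₗ[L0 μ] P) : Prop where
  pn_emb : ∀ α : M ⊗[L0 μ] N, IsLUB (epsReps μ α) (pn μ (e α))
  dense : ∀ p : P, ∀ ε : ℝ, 0 < ε → ∃ α : M ⊗[L0 μ] N, dM μ (e α) p < ε

end Defs

/-- A realization of the `L⁰`-Lebesgue–Bochner space `L⁰(𝕏;𝔹)` as a Banach `L⁰(𝕏)`-module: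
the Banach `L⁰(𝕏)`-module `V` is identified, via the bijection `ev`, with the space
`X →ₘ[μ] B` of (classes of) measurable maps with separable range up to a.e. equality,
in such a way that the module operations are the a.e. pointwise ones and the pointwise norm
of `v` is a.e. equal to `x ↦ ‖ev v x‖`. -/
structure IsL0B (μ : Measure X) [SFinite μ] (B : Type*) [NormedAddCommGroup B]
    [NormedSpace ℝ B] (V : Type*) [AddCommGroup V] [Module (L0 μ) V] [BanachMod μ V]
    (ev : V → (X →ₘ[μ] B)) : Prop where
  bij : Function.Bijective ev
  add : ∀ v w : V, ev (v + w) = ev v + ev w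
  smul : ∀ (f : L0 μ) (v : V), ∀ᵐ x ∂μ, (ev (f • v)) x = f x • (ev v) x
  norm : ∀ v : V, ∀ᵐ x ∂μ, (pn μ v) x = ‖(ev v) x‖

/-!
The group norm `v ↦ ∫ min |v| 1` of a Banach `L⁰`-module is complete, and every linear map with a
bound `|T v| ≤ g |v|` is continuous for it. A family whose pointwise norms have finite sums bounded
by some `b ∈ L⁰` is summable: multiplied by the invertible weight `1 / (1 + b)` it becomes
absolutely summable.

For each `i` the map `a ⊗ v ↦ a(·)_i v` on the algebraic tensor product satisfies
`∑_{i ∈ F} |·| ≤ |·|_π` for finite `F`, because `∑_{i ∈ F} |a(·)_i| ≤ |a|`. It therefore extends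
by density to the projective tensor product, giving the coordinates `J i` of `𝔦`, still with
`∑_{i ∈ F} |J i p| ≤ |p|`.

The reverse inequality and injectivity follow from the reconstruction `p = ∑ i, δ_i ⊗ J i p`, where
`δ_i` is the constant `i`-th unit vector. On elementary tensors it is the expansion
`a = ∑ i, a(·)_i δ_i`, whose sum exists by the summability criterion and equals `a` because elements
of `L⁰(𝕏;ℓ₁(I))` are determined by their coordinates. It extends by density, as the partial sums
`p ↦ ∑_{i ∈ F} δ_i ⊗ J i p` are contractions. Surjectivity holds since for `g` in `ℓ₁(I, ℳ)` the
series `∑ i, δ_i ⊗ g i` converges to a preimage.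
-/

/-! ### `L⁰` as a normed lattice-ordered group -/

instance (μ : Measure X) : IsOrderedRing (L0 μ) :=
  Function.Injective.isOrderedRing AEEqFun.toGerm AEEqFun.zero_toGerm AEEqFun.one_toGerm
    AEEqFun.add_toGerm AEEqFun.mul_toGerm Iff.rfl

section L0

variable {μ : Measure X}

lemma coeFn_sum_abs {ι : Type*} (F : Finset ι) (f : ι → L0 μ) :
    ⇑(∑ i ∈ F, |f i|) =ᵐ[μ] fun x => ∑ i ∈ F, |f i x| := by
  have habs : ∀ᵐ x ∂μ, ∀ i ∈ F, |f i| x = |f i x| :=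
    (Finset.eventually_all F).2 fun i _ => AEEqFun.coeFn_abs (f i)
  filter_upwards [AEEqFun.coeFn_finsetSum F fun i => |f i|, habs] with x hsum hx
  rw [hsum, Finset.sum_apply, Finset.sum_congr rfl hx]

lemma exists_mul_eq_one_of_one_le {f : L0 μ} (hf : 1 ≤ f) : ∃ g : L0 μ, 0 ≤ g ∧ f * g = 1 := by
  have hf' : ∀ᵐ x ∂μ, 1 ≤ f x := by
    filter_upwards [AEEqFun.coeFn_le.2 hf, AEEqFun.coeFn_one (μ := μ) (β := ℝ)] with x hx hone
    rwa [hone, Pi.one_apply] at hx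
  let g : L0 μ := AEEqFun.compMeasurable (·⁻¹) measurable_inv f
  have hg : ∀ᵐ x ∂μ, g x = (f x)⁻¹ := AEEqFun.coeFn_compMeasurable _ measurable_inv f
  refine ⟨g, AEEqFun.coeFn_le.1 ?_, AEEqFun.ext ?_⟩
  · filter_upwards [hf', hg, AEEqFun.coeFn_zero (μ := μ) (β := ℝ)] with x hfx hgx hzero
    rw [hzero, hgx]
    exact inv_nonneg.2 (zero_le_one.trans hfx)
  · filter_upwards [hf', hg, AEEqFun.coeFn_mul f g, AEEqFun.coeFn_one (μ := μ) (β := ℝ)]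
      with x hfx hgx hmul hone
    rw [hmul, hone, Pi.mul_apply, hgx]
    exact mul_inv_cancel₀ (zero_lt_one.trans_le hfx).ne'

variable [SFinite μ]

lemma integrable_min_abs_one (f : L0 μ) : Integrable (fun x => min |f x| 1) μ.toFinite := by
  have hf : AEStronglyMeasurable f μ.toFinite :=
    f.aestronglyMeasurable.mono_ac (toFinite_absolutelyContinuous μ)
  refine Integrable.of_bound
    ((continuous_abs.min continuous_const).comp_aestronglyMeasurable hf) 1 (.of_forall fun x => ?_)
  rw [Real.norm_of_nonneg (by positivity)]
  exact min_le_right _ _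

lemma integral_min_abs_one_le {f : L0 μ} {g : X → ℝ} (hg : Integrable g μ.toFinite)
    (h : ∀ᵐ x ∂μ, min |f x| 1 ≤ g x) : ∫ x, min |f x| 1 ∂μ.toFinite ≤ ∫ x, g x ∂μ.toFinite :=
  integral_mono_ae (integrable_min_abs_one f) hg (by rwa [EventuallyLE, ae_toFinite])

lemma eq_zero_of_integral_min_abs_one {f : L0 μ} (h : ∫ x, min |f x| 1 ∂μ.toFinite = 0) :
    f = 0 := by
  rw [integral_eq_zero_iff_of_nonneg (fun x => by positivity) (integrable_min_abs_one f),
    EventuallyEq, ae_toFinite] at h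
  refine AEEqFun.ext ?_
  filter_upwards [h, AEEqFun.coeFn_zero (μ := μ) (β := ℝ)] with x hx hzero
  rw [hzero]
  rcases min_choice |f x| 1 with hmin | hmin <;> simp_all

/-- The norm `‖f‖ = ∫ min |f| 1` of convergence in measure. It induces the distance `dL0`, is
monotone in `|f|`, and is not homogeneous. -/
instance : NormedAddCommGroup (L0 μ) := AddGroupNorm.toNormedAddCommGroup
  { toFun := fun f => ∫ x, min |f x| 1 ∂μ.toFinite
    map_zero' := by
      refine integral_eq_zero_of_ae ?_
      rw [EventuallyEq, ae_toFinite]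
      filter_upwards [AEEqFun.coeFn_zero (μ := μ) (β := ℝ)] with x hzero
      simp [hzero]
    add_le' := fun f g => by
      rw [← integral_add (integrable_min_abs_one f) (integrable_min_abs_one g)]
      refine integral_min_abs_one_le
        ((integrable_min_abs_one f).add (integrable_min_abs_one g)) ?_
      filter_upwards [AEEqFun.coeFn_add f g] with x hadd
      rw [hadd, Pi.add_apply]
      have := abs_add_le (f x) (g x)
      grind
    neg' := fun f => by
      refine integral_congr_ae ?_
      rw [EventuallyEq, ae_toFinite]
      filter_upwards [AEEqFun.coeFn_neg f] with x hneg
      rw [hneg, Pi.neg_apply, abs_neg]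
    eq_zero_of_map_eq_zero' := fun _ => eq_zero_of_integral_min_abs_one }

lemma norm_l0_def (f : L0 μ) : ‖f‖ = ∫ x, min |f x| 1 ∂μ.toFinite := rfl

lemma dL0_zero_right (f : L0 μ) : dL0 μ f 0 = ‖f‖ := by
  refine integral_congr_ae ?_
  rw [EventuallyEq, ae_toFinite]
  filter_upwards [AEEqFun.coeFn_zero (μ := μ) (β := ℝ)] with x hzero
  simp [hzero]

instance : HasSolidNorm (L0 μ) where
  solid f g h := by
    refine integral_min_abs_one_le (integrable_min_abs_one g) ?_
    filter_upwards [AEEqFun.coeFn_le.2 h, AEEqFun.coeFn_abs f, AEEqFun.coeFn_abs g]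
      with x hx hf hg
    exact min_le_min_right 1 (by rwa [hf, hg] at hx)

lemma tendsto_norm_inv_natCast_smul (g : L0 μ) :
    Tendsto (fun n : ℕ => ‖(n : ℝ)⁻¹ • g‖) atTop (nhds 0) := by
  have hlim : ∀ x, Tendsto (fun n : ℕ => min |(n : ℝ)⁻¹ * g x| 1) atTop (nhds 0) := fun x => by
    simpa using ((tendsto_inv_atTop_nhds_zero_nat (𝕜 := ℝ)).mul_const (g x)).abs.min
      (tendsto_const_nhds (x := (1 : ℝ)))
  have hsmul : ∀ n : ℕ, (fun x => min |((n : ℝ)⁻¹ • g) x| 1) =ᵐ[μ.toFinite]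
      fun x => min |(n : ℝ)⁻¹ * g x| 1 := fun n => by
    rw [EventuallyEq, ae_toFinite]
    filter_upwards [AEEqFun.coeFn_smul (n : ℝ)⁻¹ g] with x hx
    rw [hx, Pi.smul_apply, smul_eq_mul]
  simp only [norm_l0_def, integral_congr_ae (hsmul _)]
  rw [← integral_zero X ℝ]
  refine tendsto_integral_of_dominated_convergence (fun _ => 1)
    (fun n => ((integrable_min_abs_one _).congr (hsmul n)).aestronglyMeasurable)
    (integrable_const 1) (fun n => .of_forall fun x => ?_) (.of_forall hlim)
  rw [Real.norm_of_nonneg (by positivity)]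
  exact min_le_right _ _

/-- Where `|g| ≤ C` the first term suffices, and elsewhere the second term already exceeds the
truncation level `1`. -/
lemma norm_mul_le_add_norm_inv_smul (g s : L0 μ) {C : ℝ} (hC : 1 ≤ C) :
    ‖g * s‖ ≤ C * ‖s‖ + ‖C⁻¹ • g‖ := by
  simp only [norm_l0_def]
  rw [← integral_const_mul, ← integral_add ((integrable_min_abs_one s).const_mul C)
    (integrable_min_abs_one _)]
  refine integral_min_abs_one_le
    (((integrable_min_abs_one s).const_mul C).add (integrable_min_abs_one _)) ?_
  filter_upwards [AEEqFun.coeFn_mul g s, AEEqFun.coeFn_smul C⁻¹ g] with x hmul hsmul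
  have hC0 : 0 < C := zero_lt_one.trans_le hC
  rw [hmul, hsmul, Pi.mul_apply, Pi.smul_apply, smul_eq_mul, abs_mul, abs_mul,
    abs_of_pos (inv_pos.2 hC0)]
  rcases le_total |g x| C with hg | hg
  · calc min (|g x| * |s x|) 1 ≤ min (C * |s x|) (C * 1) :=
          min_le_min (by gcongr) (by linarith)
      _ = C * min |s x| 1 := (mul_min_of_nonneg _ _ hC0.le).symm
      _ ≤ C * min |s x| 1 + min (C⁻¹ * |g x|) 1 := le_add_of_nonneg_right (by positivity)
  · have htail : 1 ≤ C⁻¹ * |g x| := by rwa [← div_eq_inv_mul, one_le_div hC0]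
    calc min (|g x| * |s x|) 1 ≤ min (C⁻¹ * |g x|) 1 := by
          rw [min_eq_right htail]
          exact min_le_right _ _
      _ ≤ C * min |s x| 1 + min (C⁻¹ * |g x|) 1 := le_add_of_nonneg_left (by positivity)

lemma tendsto_const_mul_nhds_zero (g : L0 μ) : Tendsto (g * ·) (nhds 0) (nhds 0) := by
  rw [Metric.tendsto_nhds_nhds]
  intro ε hε
  obtain ⟨n, hn, hn1⟩ := ((tendsto_norm_inv_natCast_smul g).eventually_lt_const
    (half_pos hε) |>.and (eventually_ge_atTop 1)).exists
  have hn1' : (1 : ℝ) ≤ n := by exact_mod_cast hn1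
  have hn0 : (0 : ℝ) < n := by linarith
  refine ⟨ε / 2 / n, by positivity, fun s hs => ?_⟩
  rw [dist_zero_right, lt_div_iff₀' hn0] at hs
  rw [dist_zero_right]
  linarith [norm_mul_le_add_norm_inv_smul g s hn1']

lemma sum_norm_le_of_sum_abs_le_one {ι : Type*} {F : Finset ι} {f : ι → L0 μ}
    (h : ∑ i ∈ F, |f i| ≤ 1) : ∑ i ∈ F, ‖f i‖ ≤ μ.toFinite.real univ := by
  simp only [norm_l0_def]
  rw [← integral_finsetSum F fun i _ => integrable_min_abs_one (f i)]
  calc ∫ x, ∑ i ∈ F, min |f i x| 1 ∂μ.toFinite ≤ ∫ _, 1 ∂μ.toFinite := by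
        refine integral_mono_ae (integrable_finsetSum F fun i _ => integrable_min_abs_one (f i))
          (integrable_const 1) ?_
        rw [EventuallyLE, ae_toFinite]
        filter_upwards [AEEqFun.coeFn_le.2 h, coeFn_sum_abs F f,
          AEEqFun.coeFn_one (μ := μ) (β := ℝ)] with x hx hsum hone
        rw [hsum, hone] at hx
        exact (Finset.sum_le_sum fun i _ => min_le_left _ _).trans hx
    _ = μ.toFinite.real univ := by simp

end L0

/-! ### Limits of additive maps -/

section Limits

/-- The continuous linear extension to `P` of a linear map `T` that is dominated in norm by
a linear map `e` with dense range in `P`. It is the analogue of `LinearMap.extendOfNorm` for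
group norms on which the scalars do not act homogeneously. -/
def extendDense {R A P M : Type*} [Ring R] [AddCommGroup A] [Module R A]
    [NormedAddCommGroup P] [Module R P] [ContinuousConstSMul R P]
    [NormedAddCommGroup M] [Module R M] [ContinuousConstSMul R M] [CompleteSpace M]
    (e : A →ₗ[R] P) (T : A →ₗ[R] M) {C : ℝ} (hT : ∀ α, ‖T α‖ ≤ C * ‖e α‖) : P →L[R] M :=
  letI := SeminormedAddCommGroup.induced A P e
  ContinuousLinearMap.extend ⟨T, AddMonoidHomClass.continuous_of_bound T C hT⟩
    ⟨e, continuous_induced_dom⟩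

lemma extendDense_apply {R A P M : Type*} [Ring R] [AddCommGroup A] [Module R A]
    [NormedAddCommGroup P] [Module R P] [ContinuousConstSMul R P]
    [NormedAddCommGroup M] [Module R M] [ContinuousConstSMul R M] [CompleteSpace M]
    {e : A →ₗ[R] P} (he : DenseRange e) {T : A →ₗ[R] M} {C : ℝ} (hT : ∀ α, ‖T α‖ ≤ C * ‖e α‖)
    (α : A) : extendDense e T hT (e α) = T α :=
  letI := SeminormedAddCommGroup.induced A P e
  ContinuousLinearMap.extend_eq (e := ⟨e, continuous_induced_dom⟩)
    ⟨T, AddMonoidHomClass.continuous_of_bound T C hT⟩ he ⟨rfl⟩ α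

lemma isClosed_setOf_hasSum {ι E G : Type*} [SeminormedAddCommGroup E]
    [SeminormedAddCommGroup G] {T : ι → E →+ G} {S : E → G} {C : NNReal}
    (hT : ∀ (F : Finset ι) x, ‖∑ i ∈ F, T i x‖ ≤ C * ‖x‖) (hS : Continuous S) :
    IsClosed {x | HasSum (T · x) (S x)} := by
  have hlip : ∀ F : Finset ι, LipschitzWith C fun x => ∑ i ∈ F, T i x := fun F =>
    LipschitzWith.of_dist_le_mul fun x y => by
      simpa only [dist_eq_norm, ← Finset.sum_sub_distrib, ← map_sub] using hT F (x - y)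
  exact (LipschitzWith.uniformEquicontinuous _ C hlip).equicontinuous.isClosed_setOfPred_tendsto hS

end Limits

/-! ### Banach `L⁰`-modules -/

section PointwiseNorm

variable {μ : Measure X} [SFinite μ] {M : Type*} [AddCommGroup M] [Module (L0 μ) M]
  [BanachMod μ M]

lemma pn_nonneg (v : M) : 0 ≤ pn μ v := BanachMod.pn_nonneg v

lemma pn_eq_zero {v : M} : pn μ v = 0 ↔ v = 0 := BanachMod.pn_eq_zero v

lemma pn_zero : pn μ (0 : M) = 0 := pn_eq_zero.2 rfl

lemma pn_add_le (v w : M) : pn μ (v + w) ≤ pn μ v + pn μ w := BanachMod.pn_add_le v w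

lemma pn_smul (f : L0 μ) (v : M) : pn μ (f • v) = |f| * pn μ v := BanachMod.pn_smul f v

lemma pn_neg (v : M) : pn μ (-v) = pn μ v := by
  rw [← neg_one_smul (L0 μ) v, pn_smul, abs_neg, abs_of_nonneg zero_le_one, one_mul]

lemma pn_sum_le {ι : Type*} (F : Finset ι) (v : ι → M) :
    pn μ (∑ i ∈ F, v i) ≤ ∑ i ∈ F, pn μ (v i) :=
  Finset.le_sum_of_subadditive (pn μ) pn_zero.le pn_add_le F v

lemma abs_pn_sub_pn_le (v w : M) : |pn μ v - pn μ w| ≤ pn μ (v - w) := by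
  have h (v w : M) : pn μ v - pn μ w ≤ pn μ (v - w) :=
    sub_le_iff_le_add.2 (by simpa using pn_add_le (μ := μ) (v - w) w)
  refine abs_le'.2 ⟨h v w, ?_⟩
  rw [neg_sub, ← pn_neg (v - w), neg_sub]
  exact h w v

end PointwiseNorm

/-- The group norm `v ↦ ‖|v|‖` of a Banach `L⁰`-module, which induces its distance. It is not
an instance since `μ` is not determined by `M`. -/
abbrev normedAddCommGroupOfBanachMod (μ : Measure X) [SFinite μ] (M : Type*) [AddCommGroup M]
    [Module (L0 μ) M] [BanachMod μ M] : NormedAddCommGroup M :=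
  AddGroupNorm.toNormedAddCommGroup
    { toFun := fun v => ‖pn μ v‖
      map_zero' := by rw [pn_zero, norm_zero]
      add_le' := fun v w => (norm_le_norm_of_abs_le_abs <| abs_le_abs_of_nonneg (pn_nonneg _)
        (pn_add_le v w)).trans (norm_add_le _ _)
      neg' := fun v => by rw [pn_neg]
      eq_zero_of_map_eq_zero' := fun v hv => pn_eq_zero.1 (norm_eq_zero.1 hv) }

/-- The norm of `M` is the group norm of the Banach `L⁰`-module `M`, that is, it induces the
distance of `M`. -/
class IsMetrized (μ : Measure X) [SFinite μ] (M : Type*) [NormedAddCommGroup M]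
    [Module (L0 μ) M] [BanachMod μ M] : Prop where
  norm_pn : ∀ v : M, ‖pn μ v‖ = ‖v‖

section Metrized

variable (μ : Measure X) [SFinite μ] {M N : Type*}
  [NormedAddCommGroup M] [Module (L0 μ) M] [BanachMod μ M] [IsMetrized μ M]
  [NormedAddCommGroup N] [Module (L0 μ) N] [BanachMod μ N] [IsMetrized μ N]

lemma norm_le_norm_of_pn_le {v : M} {w : N} (h : pn μ v ≤ pn μ w) : ‖v‖ ≤ ‖w‖ := by
  rw [← IsMetrized.norm_pn (μ := μ) v, ← IsMetrized.norm_pn (μ := μ) w]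
  exact norm_le_norm_of_abs_le_abs (abs_le_abs_of_nonneg (pn_nonneg _) h)

lemma dM_eq_dist (v w : M) : dM μ v w = dist v w := by
  rw [dM, dL0_zero_right, dist_eq_norm, IsMetrized.norm_pn]

lemma continuous_pn : Continuous (pn μ : M → L0 μ) :=
  LipschitzWith.continuous (K := 1) <| LipschitzWith.of_dist_le_mul fun v w => by
    rw [NNReal.coe_one, one_mul, dist_eq_norm, dist_eq_norm, ← IsMetrized.norm_pn (μ := μ) (v - w)]
    exact norm_le_norm_of_abs_le_abs ((abs_pn_sub_pn_le v w).trans (le_abs_self _))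

lemma completeSpace_of_isMetrized (μ : Measure X) [SFinite μ] (M : Type*) [NormedAddCommGroup M]
    [Module (L0 μ) M] [BanachMod μ M] [IsMetrized μ M] : CompleteSpace M := by
  refine Metric.complete_of_cauchySeq_tendsto fun u hu => ?_
  obtain ⟨v, hv⟩ := BanachMod.complete (μ := μ) u fun ε hε => by
    obtain ⟨N, hN⟩ := Metric.cauchySeq_iff.1 hu ε hε
    exact ⟨N, fun m hm n hn => (dM_eq_dist μ (u m) (u n)).trans_lt (hN m hm n hn)⟩
  exact ⟨v, tendsto_iff_dist_tendsto_zero.2 (hv.congr fun n => dM_eq_dist μ (u n) v)⟩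

variable {μ}

lemma continuous_of_pn_le {T : M →+ N} {g : L0 μ} (hT : ∀ v, pn μ (T v) ≤ g * pn μ v) :
    Continuous T := by
  refine continuous_of_continuousAt_zero T ?_
  have hbound : Tendsto (fun v : M => g * pn μ v) (nhds 0) (nhds 0) :=
    (tendsto_const_mul_nhds_zero g).comp (pn_zero (μ := μ) (M := M) ▸ (continuous_pn μ).tendsto 0)
  rw [ContinuousAt, map_zero, tendsto_zero_iff_norm_tendsto_zero]
  refine squeeze_zero (fun _ => norm_nonneg _) (fun v => ?_) (by simpa using hbound.norm)
  rw [← IsMetrized.norm_pn (μ := μ)]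
  exact norm_le_norm_of_abs_le_abs (abs_le_abs_of_nonneg (pn_nonneg _) (hT v))

variable (μ M) in
lemma continuousConstSMul_of_isMetrized : ContinuousConstSMul (L0 μ) M :=
  ⟨fun f => continuous_of_pn_le (T := DistribSMul.toAddMonoidHom M f) fun v => (pn_smul f v).le⟩

/-- Multiplication by the invertible weight `1 / (1 + b)` makes the family absolutely summable. -/
lemma summable_of_sum_pn_le {ι : Type*} {v : ι → M} {b : L0 μ}
    (h : ∀ F : Finset ι, ∑ i ∈ F, pn μ (v i) ≤ b) : Summable v := by
  have := completeSpace_of_isMetrized μ M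
  have := continuousConstSMul_of_isMetrized μ M
  have hb : 0 ≤ b := by simpa using h ∅
  obtain ⟨g, hg, hbg⟩ := exists_mul_eq_one_of_one_le (le_add_of_nonneg_right (a := 1) hb)
  have hweighted : Summable fun i => g • v i := by
    refine .of_norm (summable_of_sum_le (c := μ.toFinite.real univ) (fun _ => norm_nonneg _)
      fun F => ?_)
    simp only [← IsMetrized.norm_pn (μ := μ) (g • v _), pn_smul, abs_of_nonneg hg]
    refine sum_norm_le_of_sum_abs_le_one ?_
    calc ∑ i ∈ F, |g * pn μ (v i)| = g * ∑ i ∈ F, pn μ (v i) := by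
          rw [Finset.mul_sum]
          exact Finset.sum_congr rfl fun i _ => abs_of_nonneg (mul_nonneg hg (pn_nonneg _))
      _ ≤ g * (1 + b) := by
          gcongr
          exact (h F).trans (le_add_of_nonneg_left zero_le_one)
      _ = 1 := by rw [mul_comm, hbg]
  simpa only [smul_smul, hbg, one_smul] using hweighted.const_smul (1 + b)

end Metrized

/-! ### `ℓ₁`-bases -/

/-- Vectors `δ i` and coordinate functionals `c i` exhibiting the Banach `L⁰`-module `V` as
a module of `ℓ₁`-type: the coordinates are absolutely summable with sum at most the pointwise norm,
and they separate points. The model is `L⁰(𝕏;ℓ₁(I))` with the constant unit vectors. -/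
structure IsL1Basis (μ : Measure X) [SFinite μ] {I V : Type*} [AddCommGroup V] [Module (L0 μ) V]
    [BanachMod μ V] (c : I → V →ₗ[L0 μ] L0 μ) (δ : I → V) : Prop where
  pn_delta_le : ∀ i, pn μ (δ i) ≤ 1
  coord_self : ∀ i, c i (δ i) = 1
  coord_of_ne : ∀ {i k}, i ≠ k → c k (δ i) = 0
  sum_abs_coord_le : ∀ (F : Finset I) (a : V), ∑ i ∈ F, |c i a| ≤ pn μ a
  eq_zero_of_coord : ∀ a : V, (∀ k, c k a = 0) → a = 0

namespace IsL1Basis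

variable {μ : Measure X} [SFinite μ] {I V : Type*} [NormedAddCommGroup V] [Module (L0 μ) V]
  [BanachMod μ V] [IsMetrized μ V] {c : I → V →ₗ[L0 μ] L0 μ} {δ : I → V}

lemma continuous_coord (hB : IsL1Basis μ c δ) (k : I) : Continuous (c k) :=
  AddMonoidHomClass.continuous_of_bound (c k) 1 fun v => by
    rw [one_mul, ← IsMetrized.norm_pn (μ := μ) v]
    refine norm_le_norm_of_abs_le_abs (le_trans ?_ (le_abs_self _))
    simpa using hB.sum_abs_coord_le {k} v

lemma hasSum_coord_smul (hB : IsL1Basis μ c δ) (a : V) : HasSum (fun i => c i a • δ i) a := by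
  have hsummable : Summable fun i => c i a • δ i := by
    refine summable_of_sum_pn_le (μ := μ) (b := pn μ a) fun F =>
      le_trans (Finset.sum_le_sum fun i _ => ?_) (hB.sum_abs_coord_le F a)
    rw [pn_smul]
    exact mul_le_of_le_one_right (abs_nonneg _) (hB.pn_delta_le i)
  obtain ⟨s, hs⟩ := hsummable
  have hcoord (k : I) : c k s = c k a := by
    refine (hs.map (c k) (hB.continuous_coord k)).unique ?_
    convert hasSum_single k fun i hi => ?_ using 1
    · simp [hB.coord_self]
    · simp [hB.coord_of_ne hi]
  rwa [sub_eq_zero.1 (hB.eq_zero_of_coord (s - a) fun k => by rw [map_sub, hcoord, sub_self])] at hs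

end IsL1Basis

/-! ### The projective tensor product -/

section Contract

variable {R V M : Type*} [CommSemiring R] [AddCommMonoid V] [Module R V] [AddCommMonoid M]
  [Module R M]

/-- The contraction `a ⊗ v ↦ ω a • v` of a tensor with a linear functional `ω`. -/
def contract (ω : V →ₗ[R] R) : V ⊗[R] M →ₗ[R] M :=
  TensorProduct.lid R M ∘ₗ ω.rTensor M

lemma contract_tmul (ω : V →ₗ[R] R) (a : V) (v : M) : contract ω (a ⊗ₜ[R] v) = ω a • v := by
  simp [contract]

end Contract

namespace IsPiTensor

variable {μ : Measure X} [SFinite μ] {V M P : Type*} [AddCommGroup V] [Module (L0 μ) V]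
  [BanachMod μ V] [AddCommGroup M] [Module (L0 μ) M] [BanachMod μ M]

lemma pn_tmul_le [AddCommGroup P] [Module (L0 μ) P] [BanachMod μ P]
    {e : V ⊗[L0 μ] M →ₗ[L0 μ] P} (hP : IsPiTensor μ V M P e) (a : V) (v : M) :
    pn μ (e (a ⊗ₜ v)) ≤ pn μ a * pn μ v :=
  (hP.pn_emb _).1 ⟨1, fun _ => a, fun _ => v, by simp, by simp⟩

variable [NormedAddCommGroup P] [Module (L0 μ) P] [BanachMod μ P] [IsMetrized μ P]
  {e : V ⊗[L0 μ] M →ₗ[L0 μ] P}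

lemma denseRange (hP : IsPiTensor μ V M P e) : DenseRange e :=
  Metric.denseRange_iff.2 fun p ε hε => by
    obtain ⟨α, hα⟩ := hP.dense p ε hε
    exact ⟨α, by rwa [dist_comm, ← dM_eq_dist μ]⟩

lemma addMonoidHom_ext (hP : IsPiTensor μ V M P e) {G : Type*} [AddCommMonoid G]
    [TopologicalSpace G] [T2Space G] {S T : P →+ G} (hS : Continuous S) (hT : Continuous T)
    (h : ∀ a v, S (e (a ⊗ₜ v)) = T (e (a ⊗ₜ v))) : S = T := by
  refine DFunLike.coe_injective (hP.denseRange.equalizer hS hT (funext fun α => ?_))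
  induction α using TensorProduct.induction_on with
  | zero => simp
  | tmul a v => exact h a v
  | add α β hα hβ => simp_all

end IsPiTensor

namespace IsL1Basis

variable {μ : Measure X} [SFinite μ] {I V M P : Type*}
  [AddCommGroup V] [Module (L0 μ) V] [BanachMod μ V]
  {c : I → V →ₗ[L0 μ] L0 μ} {δ : I → V}

section

variable [AddCommGroup M] [Module (L0 μ) M] [BanachMod μ M]
  [AddCommGroup P] [Module (L0 μ) P] [BanachMod μ P] {e : V ⊗[L0 μ] M →ₗ[L0 μ] P}

lemma sum_pn_contract_le (hB : IsL1Basis μ c δ) (hP : IsPiTensor μ V M P e) (F : Finset I)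
    (α : V ⊗[L0 μ] M) : ∑ i ∈ F, pn μ (contract (c i) α) ≤ pn μ (e α) := by
  refine (hP.pn_emb α).2 ?_
  rintro _ ⟨n, v, w, rfl, rfl⟩
  calc ∑ i ∈ F, pn μ (contract (c i) (∑ k, v k ⊗ₜ[L0 μ] w k))
      ≤ ∑ i ∈ F, ∑ k, |c i (v k)| * pn μ (w k) := by
        refine Finset.sum_le_sum fun i _ => ?_
        simpa only [map_sum, contract_tmul, pn_smul] using
          pn_sum_le (μ := μ) Finset.univ fun k => contract (c i) (v k ⊗ₜ[L0 μ] w k)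
    _ = ∑ k, (∑ i ∈ F, |c i (v k)|) * pn μ (w k) := by
        simp only [Finset.sum_mul]
        exact Finset.sum_comm
    _ ≤ ∑ k, pn μ (v k) * pn μ (w k) := Finset.sum_le_sum fun k _ =>
        mul_le_mul_of_nonneg_right (hB.sum_abs_coord_le F (v k)) (pn_nonneg _)

lemma pn_delta_tmul_le (hB : IsL1Basis μ c δ) (hP : IsPiTensor μ V M P e) (i : I) (v : M) :
    pn μ (e (δ i ⊗ₜ v)) ≤ pn μ v :=
  (hP.pn_tmul_le _ _).trans (mul_le_of_le_one_left (pn_nonneg v) (hB.pn_delta_le i))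

end

variable [NormedAddCommGroup M] [Module (L0 μ) M] [BanachMod μ M] [IsMetrized μ M]
  [NormedAddCommGroup P] [Module (L0 μ) P] [BanachMod μ P] [IsMetrized μ P]
  {e : V ⊗[L0 μ] M →ₗ[L0 μ] P}

lemma norm_contract_le (hB : IsL1Basis μ c δ) (hP : IsPiTensor μ V M P e) (i : I)
    (α : V ⊗[L0 μ] M) : ‖contract (c i) α‖ ≤ 1 * ‖e α‖ := by
  rw [one_mul]
  exact norm_le_norm_of_pn_le μ (by simpa using hB.sum_pn_contract_le hP {i} α)

/-- The `i`-th coordinate `P → M` of the operator `𝔦`, the continuous extension of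
`a ⊗ v ↦ c i a • v`. -/
def tensorCoord (hB : IsL1Basis μ c δ) (hP : IsPiTensor μ V M P e) (i : I) : P →L[L0 μ] M :=
  have := completeSpace_of_isMetrized μ M
  have := continuousConstSMul_of_isMetrized μ M
  have := continuousConstSMul_of_isMetrized μ P
  extendDense e (contract (c i)) (hB.norm_contract_le hP i)

lemma tensorCoord_apply (hB : IsL1Basis μ c δ) (hP : IsPiTensor μ V M P e) (i : I)
    (α : V ⊗[L0 μ] M) : hB.tensorCoord hP i (e α) = contract (c i) α :=
  have := completeSpace_of_isMetrized μ M
  have := continuousConstSMul_of_isMetrized μ M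
  have := continuousConstSMul_of_isMetrized μ P
  extendDense_apply hP.denseRange (hB.norm_contract_le hP i) α

lemma tensorCoord_tmul (hB : IsL1Basis μ c δ) (hP : IsPiTensor μ V M P e) (i : I) (a : V)
    (v : M) : hB.tensorCoord hP i (e (a ⊗ₜ v)) = c i a • v := by
  rw [tensorCoord_apply, contract_tmul]

lemma sum_pn_tensorCoord_le (hB : IsL1Basis μ c δ) (hP : IsPiTensor μ V M P e) (F : Finset I)
    (p : P) : ∑ i ∈ F, pn μ (hB.tensorCoord hP i p) ≤ pn μ p := by
  refine hP.denseRange.induction_on p (isClosed_le ?_ (continuous_pn μ)) fun α => ?_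
  · exact continuous_finsetSum F fun i _ => (continuous_pn μ).comp (hB.tensorCoord hP i).continuous
  · simpa only [tensorCoord_apply] using hB.sum_pn_contract_le hP F α

lemma tensorCoord_unique (hB : IsL1Basis μ c δ) (hP : IsPiTensor μ V M P e) {T : P → I → M}
    (hadd : ∀ p q, T (p + q) = T p + T q) (hsmul : ∀ a v i, T (e (a ⊗ₜ v)) i = c i a • v)
    {g : L0 μ} (hT : ∀ p b, IsLUB (l1PartialSums μ (T p)) b → b ≤ g * pn μ p)
    (hmem : ∀ p, Meml1 μ (T p)) (p : P) (i : I) : T p i = hB.tensorCoord hP i p := by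
  have hle (p : P) : pn μ (T p i) ≤ g * pn μ p := by
    obtain ⟨b, hb⟩ := hmem p
    exact (hb.1 ⟨{i}, by simp⟩).trans (hT p b hb)
  let Ti : P →+ M := AddMonoidHom.mk' (T · i) fun p q => congrFun (hadd p q) i
  have hTi : Ti = (hB.tensorCoord hP i : P →+ M) :=
    hP.addMonoidHom_ext (continuous_of_pn_le (μ := μ) hle) (hB.tensorCoord hP i).continuous
      fun a v => (hsmul a v i).trans (hB.tensorCoord_tmul hP i a v).symm
  exact DFunLike.congr_fun hTi p

lemma exists_tensorCoord_eq (hB : IsL1Basis μ c δ) (hP : IsPiTensor μ V M P e) {v : I → M}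
    (hv : Meml1 μ v) : ∃ p, ∀ i, hB.tensorCoord hP i p = v i := by
  obtain ⟨b, hb⟩ := hv
  obtain ⟨p, hp⟩ : Summable fun i => e (δ i ⊗ₜ[L0 μ] v i) :=
    summable_of_sum_pn_le (μ := μ) (b := b) fun F =>
      (Finset.sum_le_sum fun i _ => hB.pn_delta_tmul_le hP i (v i)).trans (hb.1 ⟨F, rfl⟩)
  refine ⟨p, fun k => (hp.map (hB.tensorCoord hP k) (hB.tensorCoord hP k).continuous).unique ?_⟩
  convert hasSum_single k fun i hi => ?_ using 1
  · simp [tensorCoord_tmul, hB.coord_self]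
  · simp [tensorCoord_tmul, hB.coord_of_ne hi]

end IsL1Basis

section Reconstruction

variable {μ : Measure X} [SFinite μ] {I V M P : Type*}
  [NormedAddCommGroup V] [Module (L0 μ) V] [BanachMod μ V] [IsMetrized μ V]
  [AddCommGroup M] [Module (L0 μ) M] [BanachMod μ M]
  [NormedAddCommGroup P] [Module (L0 μ) P] [BanachMod μ P] [IsMetrized μ P]
  {e : V ⊗[L0 μ] M →ₗ[L0 μ] P}

lemma IsPiTensor.continuous_tmul_right (hP : IsPiTensor μ V M P e) (v : M) :
    Continuous fun a => e (a ⊗ₜ v) :=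
  continuous_of_pn_le (μ := μ) (g := pn μ v)
    (T := (e ∘ₗ (TensorProduct.mk (L0 μ) V M).flip v).toAddMonoidHom) fun a =>
      (hP.pn_tmul_le a v).trans_eq (mul_comm _ _)

lemma IsL1Basis.hasSum_tmul_contract {c : I → V →ₗ[L0 μ] L0 μ} {δ : I → V}
    (hB : IsL1Basis μ c δ) (hP : IsPiTensor μ V M P e) (α : V ⊗[L0 μ] M) :
    HasSum (fun i => e (δ i ⊗ₜ contract (c i) α)) (e α) := by
  induction α using TensorProduct.induction_on with
  | zero => simp
  | tmul a v =>
    simpa [Function.comp_def, contract_tmul, TensorProduct.smul_tmul] using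
      (hB.hasSum_coord_smul a).map (e ∘ₗ (TensorProduct.mk (L0 μ) V M).flip v)
        (hP.continuous_tmul_right v)
  | add α β hα hβ => simpa only [map_add, TensorProduct.tmul_add] using hα.add hβ

end Reconstruction

namespace IsL1Basis

variable {μ : Measure X} [SFinite μ] {I V M P : Type*}
  [NormedAddCommGroup V] [Module (L0 μ) V] [BanachMod μ V] [IsMetrized μ V]
  [NormedAddCommGroup M] [Module (L0 μ) M] [BanachMod μ M] [IsMetrized μ M]
  [NormedAddCommGroup P] [Module (L0 μ) P] [BanachMod μ P] [IsMetrized μ P]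
  {c : I → V →ₗ[L0 μ] L0 μ} {δ : I → V} {e : V ⊗[L0 μ] M →ₗ[L0 μ] P}

lemma hasSum_tmul_tensorCoord (hB : IsL1Basis μ c δ) (hP : IsPiTensor μ V M P e) (p : P) :
    HasSum (fun i => e (δ i ⊗ₜ hB.tensorCoord hP i p)) p := by
  let T (i : I) : P →+ P :=
    (e ∘ₗ TensorProduct.mk (L0 μ) V M (δ i) ∘ₗ (hB.tensorCoord hP i : P →ₗ[L0 μ] M)).toAddMonoidHom
  have hT (F : Finset I) (p : P) : ‖∑ i ∈ F, T i p‖ ≤ (1 : NNReal) * ‖p‖ := by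
    rw [NNReal.coe_one, one_mul]
    have hpn : pn μ (∑ i ∈ F, T i p) ≤ pn μ p :=
      (pn_sum_le F fun i => T i p).trans <|
        (Finset.sum_le_sum fun i _ => hB.pn_delta_tmul_le hP i (hB.tensorCoord hP i p)).trans
          (hB.sum_pn_tensorCoord_le hP F p)
    exact norm_le_norm_of_pn_le μ hpn
  have hclosed : IsClosed {p | HasSum (T · p) p} := isClosed_setOf_hasSum hT continuous_id
  change HasSum (T · p) p
  refine hP.denseRange.induction_on p hclosed fun α => ?_
  simpa [T, tensorCoord_apply] using hB.hasSum_tmul_contract hP α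

lemma isLUB_tensorCoord (hB : IsL1Basis μ c δ) (hP : IsPiTensor μ V M P e) (p : P) :
    IsLUB (l1PartialSums μ fun i => hB.tensorCoord hP i p) (pn μ p) := by
  refine ⟨?_, fun b hb => ?_⟩
  · rintro _ ⟨F, rfl⟩
    exact hB.sum_pn_tensorCoord_le hP F p
  · refine le_of_tendsto (((continuous_pn μ).tendsto p).comp (hB.hasSum_tmul_tensorCoord hP p))
      (.of_forall fun F => ?_)
    calc pn μ (∑ i ∈ F, e (δ i ⊗ₜ hB.tensorCoord hP i p))
        ≤ ∑ i ∈ F, pn μ (hB.tensorCoord hP i p) :=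
          (pn_sum_le F _).trans (Finset.sum_le_sum fun i _ => hB.pn_delta_tmul_le hP i _)
      _ ≤ b := hb ⟨F, rfl⟩

lemma injective_tensorCoord (hB : IsL1Basis μ c δ) (hP : IsPiTensor μ V M P e) :
    Function.Injective fun p i => hB.tensorCoord hP i p := fun p q hpq =>
  (hB.hasSum_tmul_tensorCoord hP p).unique <| by
    simpa only [congrFun hpq] using hB.hasSum_tmul_tensorCoord hP q

end IsL1Basis

/-! ### Coordinates on `L⁰(𝕏;ℓ₁(I))` -/

section LpSeq

variable {I : Type*} {E : I → Type*} [∀ i, NormedAddCommGroup (E i)] {p : ENNReal}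

lemma countable_support_of_mem_lp (hp : 0 < p.toReal) (f : lp E p) : {i | f i ≠ 0}.Countable := by
  refine ((lp.memℓp f).summable hp).countable_support.mono fun i hi => ?_
  exact (Real.rpow_pos_of_pos (norm_pos_iff.2 hi) _).ne'

variable [Fact (1 ≤ p)]

lemma exists_countable_support_of_isSeparable (hp : p ≠ ⊤) {s : Set (lp E p)}
    (hs : TopologicalSpace.IsSeparable s) :
    ∃ J : Set I, J.Countable ∧ ∀ f ∈ s, ∀ i ∉ J, f i = 0 := by
  have hp0 : 0 < p.toReal := ENNReal.toReal_pos (zero_lt_one.trans_le Fact.out).ne' hp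
  obtain ⟨D, hD, hsD⟩ := hs
  refine ⟨⋃ d ∈ D, {i | d i ≠ 0}, hD.biUnion fun d _ => countable_support_of_mem_lp hp0 d,
    fun f hf i hi => ?_⟩
  have hclosed : IsClosed {f : lp E p | f i = 0} :=
    isClosed_eq (lp.lipschitzWith_one_eval p i).continuous continuous_const
  refine closure_minimal (fun d hd => ?_) hclosed (hsD hf)
  by_contra hne
  exact hi (mem_biUnion hd hne)

/-- Separability of the range reduces the possibly uncountably many null sets to countably
many. -/
lemma ae_eq_zero_of_forall_coord {μ : Measure X} (hp : p ≠ ⊤) {f : X → lp E p}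
    (hf : AEStronglyMeasurable f μ) (h : ∀ i, ∀ᵐ x ∂μ, f x i = 0) : f =ᵐ[μ] 0 := by
  obtain ⟨t, ht, hft⟩ := hf.isSeparable_ae_range
  obtain ⟨J, hJ, htJ⟩ := exists_countable_support_of_isSeparable hp ht
  filter_upwards [hft, (ae_ball_iff hJ).2 fun i _ => h i] with x hxt hxJ
  ext i
  by_cases hi : i ∈ J
  · simpa using hxJ i hi
  · simpa using htJ (f x) hxt i hi

end LpSeq

namespace IsL0B

variable {μ : Measure X} [SFinite μ] {I V : Type*} [AddCommGroup V] [Module (L0 μ) V]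
  [BanachMod μ V] {ev : V → (X →ₘ[μ] lp (fun _ : I => ℝ) 1)} {coord : V → I → L0 μ}

/-- The `i`-th coordinate `a ↦ a(·)_i` as a linear functional on `L⁰(𝕏;ℓ₁(I))`. -/
def coordMap (hV : IsL0B μ (lp (fun _ : I => ℝ) 1) V ev)
    (hcoord : ∀ a i, ∀ᵐ x ∂μ, coord a i x = ev a x i) (i : I) : V →ₗ[L0 μ] L0 μ where
  toFun a := coord a i
  map_add' a b := by
    refine AEEqFun.ext ?_
    filter_upwards [hcoord (a + b) i, hcoord a i, hcoord b i,
      AEEqFun.coeFn_add (coord a i) (coord b i), AEEqFun.coeFn_add (ev a) (ev b)]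
      with x hab ha hb hcoord_add hev_add
    rw [hab, hV.add, hcoord_add, hev_add, Pi.add_apply, Pi.add_apply, ha, hb, lp.coeFn_add,
      Pi.add_apply]
  map_smul' f a := by
    refine AEEqFun.ext ?_
    filter_upwards [hcoord (f • a) i, hcoord a i, hV.smul f a, AEEqFun.coeFn_mul f (coord a i)]
      with x hfa ha hev_smul hmul
    rw [hfa, hev_smul, RingHom.id_apply, smul_eq_mul, hmul, Pi.mul_apply, ha, lp.coeFn_smul,
      Pi.smul_apply, smul_eq_mul]

/-- The element of `L⁰(𝕏;ℓ₁(I))` that is constantly equal to the `i`-th unit vector. -/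
def unitVec [DecidableEq I] (hV : IsL0B μ (lp (fun _ : I => ℝ) 1) V ev) (i : I) : V :=
  (Equiv.ofBijective ev hV.bij).symm (AEEqFun.const X (lp.single 1 i 1))

lemma ev_unitVec_ae [DecidableEq I] (hV : IsL0B μ (lp (fun _ : I => ℝ) 1) V ev) (i : I) :
    ∀ᵐ x ∂μ, ev (hV.unitVec i) x = lp.single 1 i 1 := by
  have hev : ev (hV.unitVec i) = AEEqFun.const X (lp.single 1 i 1) :=
    (Equiv.ofBijective ev hV.bij).apply_symm_apply _
  rw [hev]
  exact AEEqFun.coeFn_const X _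

lemma pn_unitVec [DecidableEq I] (hV : IsL0B μ (lp (fun _ : I => ℝ) 1) V ev) (i : I) :
    pn μ (hV.unitVec i) = 1 := by
  refine AEEqFun.ext ?_
  filter_upwards [hV.norm (hV.unitVec i), hV.ev_unitVec_ae i,
    AEEqFun.coeFn_one (μ := μ) (β := ℝ)] with x hnorm hev hone
  rw [hnorm, hev, hone, lp.norm_single one_pos, norm_one, Pi.one_apply]

lemma coordMap_unitVec [DecidableEq I] (hV : IsL0B μ (lp (fun _ : I => ℝ) 1) V ev)
    (hcoord : ∀ a i, ∀ᵐ x ∂μ, coord a i x = ev a x i) (i k : I) :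
    hV.coordMap hcoord k (hV.unitVec i) = Pi.single (M := fun _ => L0 μ) i 1 k := by
  have hval : ∀ᵐ x ∂μ,
      hV.coordMap hcoord k (hV.unitVec i) x = Pi.single (M := fun _ => ℝ) i 1 k := by
    filter_upwards [hcoord (hV.unitVec i) k, hV.ev_unitVec_ae i] with x hx hev
    exact hx.trans (by rw [hev, lp.coeFn_single])
  refine AEEqFun.ext ?_
  filter_upwards [hval, AEEqFun.coeFn_one (μ := μ) (β := ℝ),
    AEEqFun.coeFn_zero (μ := μ) (β := ℝ)] with x hx hone hzero
  rw [hx]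
  obtain rfl | hik := eq_or_ne k i
  · simp [hone]
  · simp [hik, hzero]

lemma sum_abs_coordMap_le (hV : IsL0B μ (lp (fun _ : I => ℝ) 1) V ev)
    (hcoord : ∀ a i, ∀ᵐ x ∂μ, coord a i x = ev a x i) (F : Finset I) (a : V) :
    ∑ i ∈ F, |hV.coordMap hcoord i a| ≤ pn μ a := by
  refine AEEqFun.coeFn_le.1 ?_
  filter_upwards [hV.norm a, coeFn_sum_abs F fun i => hV.coordMap hcoord i a,
    (Finset.eventually_all F).2 fun i _ => hcoord a i] with x hnorm hsum hx
  calc (∑ i ∈ F, |hV.coordMap hcoord i a|) x = ∑ i ∈ F, |ev a x i| := by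
        rw [hsum]
        exact Finset.sum_congr rfl fun i hi => congrArg _ (hx i hi)
    _ ≤ ‖ev a x‖ := by simpa using lp.sum_rpow_le_norm_rpow (by simp) (ev a x) F
    _ = pn μ a x := hnorm.symm

lemma eq_zero_of_coordMap (hV : IsL0B μ (lp (fun _ : I => ℝ) 1) V ev)
    (hcoord : ∀ a i, ∀ᵐ x ∂μ, coord a i x = ev a x i) {a : V}
    (ha : ∀ i, hV.coordMap hcoord i a = 0) : a = 0 := by
  have hev : ev a =ᵐ[μ] 0 :=
    ae_eq_zero_of_forall_coord ENNReal.one_ne_top (ev a).aestronglyMeasurable fun i => by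
      filter_upwards [hcoord a i, AEEqFun.coeFn_zero (μ := μ) (β := ℝ)] with x hx hzero
      have hai : coord a i = 0 := ha i
      rw [← hx, hai, hzero, Pi.zero_apply]
  refine (pn_eq_zero (μ := μ)).1 (AEEqFun.ext ?_)
  filter_upwards [hV.norm a, hev, AEEqFun.coeFn_zero (μ := μ) (β := ℝ)] with x hnorm hx hzero
  rw [hnorm, hx, hzero, Pi.zero_apply, Pi.zero_apply, norm_zero]

lemma isL1Basis [DecidableEq I] (hV : IsL0B μ (lp (fun _ : I => ℝ) 1) V ev)
    (hcoord : ∀ a i, ∀ᵐ x ∂μ, coord a i x = ev a x i) :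
    IsL1Basis μ (hV.coordMap hcoord) hV.unitVec where
  pn_delta_le i := (hV.pn_unitVec i).le
  coord_self i := by rw [hV.coordMap_unitVec hcoord, Pi.single_eq_same]
  coord_of_ne hik := by rw [hV.coordMap_unitVec hcoord, Pi.single_eq_of_ne' hik]
  sum_abs_coord_le := hV.sum_abs_coordMap_le hcoord
  eq_zero_of_coord _ := hV.eq_zero_of_coordMap hcoord

end IsL0B

theorem projective_tensor_with_L0_l1_general
    (μ : Measure X) [SFinite μ] {I : Type*}
    {V : Type*} [AddCommGroup V] [Module (L0 μ) V] [BanachMod μ V]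
    {M : Type*} [AddCommGroup M] [Module (L0 μ) M] [BanachMod μ M]
    {P : Type*} [AddCommGroup P] [Module (L0 μ) P] [BanachMod μ P]
    {c : I → V →ₗ[L0 μ] L0 μ} {δ : I → V} (hB : IsL1Basis μ c δ)
    {e : V ⊗[L0 μ] M →ₗ[L0 μ] P} (hP : IsPiTensor μ V M P e) :
    ∃ j : P → I → M,
      ((∀ (a : V) (v : M) (i : I), j (e (a ⊗ₜ[L0 μ] v)) i = c i a • v)
        ∧ (∀ p q : P, j (p + q) = j p + j q)
        ∧ (∀ (f : L0 μ) (p : P), j (f • p) = fun i => f • j p i)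
        ∧ (∀ p : P, Meml1 μ (j p))
        ∧ (∀ p : P, IsLUB (l1PartialSums μ (j p)) (pn μ p))
        ∧ Function.Injective j
        ∧ (∀ g : I → M, Meml1 μ g → ∃ p : P, j p = g))
      ∧ (∀ j' : P → I → M,
          ((∀ (a : V) (v : M) (i : I), j' (e (a ⊗ₜ[L0 μ] v)) i = c i a • v)
            ∧ (∀ p q : P, j' (p + q) = j' p + j' q)
            ∧ (∀ (f : L0 μ) (p : P), j' (f • p) = fun i => f • j' p i)
            ∧ (∀ p : P, Meml1 μ (j' p))
            ∧ (∃ g : L0 μ, 0 ≤ g ∧ ∀ (p : P) (b : L0 μ),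
                IsLUB (l1PartialSums μ (j' p)) b → b ≤ g * pn μ p)) →
          j' = j) := by
  let := normedAddCommGroupOfBanachMod μ V
  let := normedAddCommGroupOfBanachMod μ M
  let := normedAddCommGroupOfBanachMod μ P
  have : IsMetrized μ V := ⟨fun _ => rfl⟩
  have : IsMetrized μ M := ⟨fun _ => rfl⟩
  have : IsMetrized μ P := ⟨fun _ => rfl⟩
  have hlub := hB.isLUB_tensorCoord hP
  refine ⟨fun p i => hB.tensorCoord hP i p,
    ⟨fun a v i => hB.tensorCoord_tmul hP i a v, fun p q => funext fun i => map_add _ p q,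
      fun f p => funext fun i => map_smul _ f p, fun p => ⟨_, hlub p⟩, hlub,
      hB.injective_tensorCoord hP,
      fun g hg => (hB.exists_tensorCoord_eq hP hg).imp fun _ => funext⟩,
    fun j' ⟨htmul, hadd, _, hmem, g, _, hbound⟩ => ?_⟩
  exact funext fun p => funext fun i => hB.tensorCoord_unique hP hadd htmul hbound hmem p i

/-- Let `𝕏` be a σ-finite measure space, `ℳ` a Banach `L⁰(𝕏)`-module and
`I` a nonempty index set. The unique linear continuous operator
`𝔦 : L⁰(𝕏;ℓ₁(I)) ⊗̂_π ℳ → ℓ₁(I,ℳ)` with `𝔦(a ⊗ v) = (a(·)_i · v)_{i ∈ I}` is an isomorphism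
of Banach `L⁰(𝕏)`-modules. Here `V` realizes `L⁰(𝕏;ℓ₁(I))` (with coordinates `coord`), and
`P` realizes the projective tensor product `V ⊗̂_π ℳ`. -/
theorem projective_tensor_with_L0_l1
    (μ : Measure X) [SigmaFinite μ] {I : Type*} [Nonempty I]
    (V : Type*) [AddCommGroup V] [Module (L0 μ) V] [BanachMod μ V]
    (M : Type*) [AddCommGroup M] [Module (L0 μ) M] [BanachMod μ M]
    (P : Type*) [AddCommGroup P] [Module (L0 μ) P] [BanachMod μ P]
    (ev : V → (X →ₘ[μ] lp (fun _ : I => ℝ) 1))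
    (hV : IsL0B μ (lp (fun _ : I => ℝ) 1) V ev)
    (coord : V → I → L0 μ)
    (hcoord : ∀ (a : V) (i : I), ∀ᵐ x ∂μ, (coord a i) x = (ev a) x i)
    (e : V ⊗[L0 μ] M →ₗ[L0 μ] P) (hP : IsPiTensor μ V M P e) :
    ∃ j : P → I → M,
      -- `𝔦` sends `a ⊗ v` to `(a(·)_i • v)_{i ∈ I}`
      ((∀ (a : V) (v : M) (i : I), j (e (a ⊗ₜ[L0 μ] v)) i = coord a i • v)
      -- `𝔦` is `L⁰(𝕏)`-linear
        ∧ (∀ p q : P, j (p + q) = j p + j q)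
        ∧ (∀ (f : L0 μ) (p : P), j (f • p) = fun i => f • j p i)
      -- `𝔦` takes values in `ℓ₁(I, ℳ)` and preserves the pointwise norm
        ∧ (∀ p : P, Meml1 μ (j p))
        ∧ (∀ p : P, IsLUB (l1PartialSums μ (j p)) (pn μ p))
      -- `𝔦` is bijective onto `ℓ₁(I, ℳ)`
        ∧ Function.Injective j
        ∧ (∀ g : I → M, Meml1 μ g → ∃ p : P, j p = g))
      -- uniqueness among linear continuous operators with the same elementary action
      ∧ (∀ j' : P → I → M,
          ((∀ (a : V) (v : M) (i : I), j' (e (a ⊗ₜ[L0 μ] v)) i = coord a i • v)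
            ∧ (∀ p q : P, j' (p + q) = j' p + j' q)
            ∧ (∀ (f : L0 μ) (p : P), j' (f • p) = fun i => f • j' p i)
            ∧ (∀ p : P, Meml1 μ (j' p))
            ∧ (∃ g : L0 μ, 0 ≤ g ∧ ∀ (p : P) (b : L0 μ),
                IsLUB (l1PartialSums μ (j' p)) b → b ≤ g * pn μ p)) →
          j' = j) := by
  classical exact projective_tensor_with_L0_l1_general μ (hV.isL1Basis hcoord) hP

end Paper
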